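/- arXiv:1310.5651 — 6 statements merged into one kernel-verified Lean document; each statement's English description precedes it below -/
import Mathlib

section
/- The characteristic polynomial P(λ) = det(λI − J) of the matrix J has only real coefficients. -/
/-- If a complex matrix agrees with its entrywise conjugate up to a relabelling of the indices,
then its characteristic polynomial has real coefficients. -/
theorem Matrix.charpoly_coeff_im_eq_zero_of_map_conj_eq_reindex {ι : Type*} [Fintype ι]
    [DecidableEq ι] (A : Matrix ι ι ℂ) (e : ι ≃ ι)
    (h : A.map (starRingEnd ℂ) = Matrix.reindex e e A) (n : ℕ) :
    (A.charpoly.coeff n).im = 0 := by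
  have hmap : A.charpoly.map (starRingEnd ℂ) = A.charpoly := by
    rw [← Matrix.charpoly_map, h, Matrix.charpoly_reindex]
  rw [← Complex.conj_eq_iff_im, ← Polynomial.coeff_map, hmap]

/-- The characteristic polynomial `P(λ) = det(λI − J)` of the matrix `J`
has only real coefficients. Here `J` is the `2N × 2N` complex matrix (indexed `0`-based)
with `J_{k,k+1} = J_{k+1,k} = 1`, `J_{k,k} = i γ_k`, and all other entries zero,
where the real numbers `γ` satisfy the PT-antisymmetry condition. -/
theorem stmt_0 (N : ℕ) (hN : 1 ≤ N) (γ : Fin (2 * N) → ℝ)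
    (hγ : ∀ k : Fin (2 * N), γ k = - γ ⟨2 * N - 1 - (k : ℕ), by have := k.isLt; omega⟩)
    (J : Matrix (Fin (2 * N)) (Fin (2 * N)) ℂ)
    (hJ : ∀ k m : Fin (2 * N), J k m =
      if (k : ℕ) + 1 = (m : ℕ) then 1
      else if (m : ℕ) + 1 = (k : ℕ) then 1
      else if k = m then Complex.I * (γ k : ℂ) else 0) :
    ∀ n : ℕ, (J.charpoly.coeff n).im = 0 := by
  intro n
  refine Matrix.charpoly_coeff_im_eq_zero_of_map_conj_eq_reindex J Fin.revPerm ?_ n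
  ext k m
  have hrev : γ k.rev = - γ k := by
    have hk : (⟨2 * N - 1 - (k : ℕ), by omega⟩ : Fin (2 * N)) = k.rev := by
      ext
      simp only [Fin.val_rev]
      omega
    rw [hγ k, hk, neg_neg]
  have hsup : (k.rev : ℕ) + 1 = (m.rev : ℕ) ↔ (m : ℕ) + 1 = (k : ℕ) := by
    simp only [Fin.val_rev]
    omega
  have hsub : (m.rev : ℕ) + 1 = (k.rev : ℕ) ↔ (k : ℕ) + 1 = (m : ℕ) := by
    simp only [Fin.val_rev]
    omega
  simp only [Matrix.map_apply, Matrix.reindex_apply, Matrix.submatrix_apply, Fin.revPerm_symm,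
    Fin.revPerm_apply, hJ, hsup, hsub, hrev, Fin.rev_inj]
  split_ifs <;> simp
end

section
/- Let Z be the 2N×2N complex matrix with entries Z_{k,j} = (−1)^{j−1} if j = 2N+1−k and Z_{k,j} = 0 otherwise. Then Z·Z = −I (so Z is invertible with Z^{−1} = −Z), and Z^{−1}·J·Z = −J. Consequently, the characteristic polynomial P of J is an even function: P(−λ) = P(λ) for all λ ∈ ℂ, i.e., all coefficients of odd powers of λ in P vanish. -/
open Matrix Polynomial

/-- If an invertible matrix conjugates `A` to `-A`, the characteristic polynomial of an
even-dimensional `A` is even. -/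
lemma Matrix.charpoly_eval_neg_of_conj_eq_neg {n R : Type*} [Fintype n] [DecidableEq n]
    [CommRing R] {A B C : Matrix n n R} (hn : Even (Fintype.card n)) (hBC : B * C = 1)
    (hA : B * A * C = -A) (x : R) :
    A.charpoly.eval (-x) = A.charpoly.eval x := by
  have hdet : B.det * C.det = 1 := by rw [← det_mul, hBC, det_one]
  have hconj : B * (scalar n x - A) * C = scalar n x + A := by
    rw [mul_sub, sub_mul, hA, ← (scalar_commute x (fun r => mul_comm x r) B).eq, mul_assoc, hBC,
      mul_one, sub_neg_eq_add]
  have hneg : scalar n (-x) - A = -(scalar n x + A) := by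
    rw [map_neg]; abel
  rw [eval_charpoly, eval_charpoly, hneg, det_neg, hn.neg_one_pow, one_mul, ← hconj, det_mul,
    det_mul, mul_right_comm, hdet, one_mul]

/-- The odd coefficients of an even polynomial over a domain of characteristic
zero vanish. -/
lemma Polynomial.coeff_eq_zero_of_odd_of_eval_neg {R : Type*} [CommRing R] [IsDomain R]
    [CharZero R] {p : R[X]} (hp : ∀ x, p.eval (-x) = p.eval x) {n : ℕ} (hn : Odd n) :
    p.coeff n = 0 := by
  have hcomp : p.comp (C (-1) * X) = p := Polynomial.funext fun x => by
    simpa using hp x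
  have h := congrArg (fun q => coeff q n) hcomp
  simp only [comp_C_mul_X_coeff, hn.neg_one_pow] at h
  exact self_eq_neg.mp (by simpa using h.symm)

/-- With `Z` the `2N × 2N` matrix with `Z_{k,j} = (−1)^{j−1}` if `j = 2N+1−k`
(here written `0`-based: `Z k j = (−1)^j` if `j = 2N−1−k`) and zero otherwise, one has
`Z·Z = −I` (so `Z⁻¹ = −Z`), `Z⁻¹·J·Z = −J`, hence the characteristic polynomial of `J`
is even: `P(−λ) = P(λ)` for all `λ ∈ ℂ`, i.e. all odd-power coefficients vanish. -/
theorem stmt_1 (N : ℕ) (hN : 1 ≤ N) (γ : Fin (2 * N) → ℝ)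
    (hγ : ∀ k : Fin (2 * N), γ k = - γ ⟨2 * N - 1 - (k : ℕ), by have := k.isLt; omega⟩)
    (J : Matrix (Fin (2 * N)) (Fin (2 * N)) ℂ)
    (hJ : ∀ k m : Fin (2 * N), J k m =
      if (k : ℕ) + 1 = (m : ℕ) then 1
      else if (m : ℕ) + 1 = (k : ℕ) then 1
      else if k = m then Complex.I * (γ k : ℂ) else 0)
    (Z : Matrix (Fin (2 * N)) (Fin (2 * N)) ℂ)
    (hZ : ∀ k j : Fin (2 * N), Z k j =
      if (j : ℕ) = 2 * N - 1 - (k : ℕ) then (-1 : ℂ) ^ (j : ℕ) else 0) :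
    Z * Z = -1 ∧ Z⁻¹ = -Z ∧ Z⁻¹ * J * Z = -J ∧
      (∀ lam : ℂ, J.charpoly.eval (-lam) = J.charpoly.eval lam) ∧
      (∀ n : ℕ, Odd n → J.charpoly.coeff n = 0) := by
  have hval (k : Fin (2 * N)) : (k.rev : ℕ) = 2 * N - 1 - k := by
    rw [Fin.val_rev]; omega
  have hZrev (k j : Fin (2 * N)) : Z k j = if j = k.rev then (-1 : ℂ) ^ (j : ℕ) else 0 := by
    simp only [hZ, Fin.ext_iff, hval]
  have hγrev (k : Fin (2 * N)) : γ k.rev = -γ k := by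
    rw [hγ k, neg_neg]
    exact congrArg γ (Fin.ext (hval k))
  have hsign (k : Fin (2 * N)) : (-1 : ℂ) ^ (k.rev : ℕ) = -(-1) ^ (k : ℕ) := by
    have hodd : Odd ((k.rev : ℕ) + k) := ⟨N - 1, by have := hval k; omega⟩
    have h := hodd.neg_one_pow (α := ℂ)
    rw [pow_add] at h
    have hsq : (-1 : ℂ) ^ (k : ℕ) * (-1) ^ (k : ℕ) = 1 := by simp [← mul_pow]
    linear_combination (-1 : ℂ) ^ (k : ℕ) * h - (-1 : ℂ) ^ (k.rev : ℕ) * hsq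
  have hZmul (M : Matrix (Fin (2 * N)) (Fin (2 * N)) ℂ) (k m : Fin (2 * N)) :
      (Z * M) k m = (-1) ^ (k.rev : ℕ) * M k.rev m := by
    simp [mul_apply, hZrev]
  have hmulZ (M : Matrix (Fin (2 * N)) (Fin (2 * N)) ℂ) (k m : Fin (2 * N)) :
      (M * Z) k m = M k m.rev * (-1) ^ (m : ℕ) := by
    simp [mul_apply, hZrev, ← Fin.rev_eq_iff]
  have hZZ : Z * Z = -1 := by
    ext k m
    rw [hZmul, hZrev, Fin.rev_rev, Matrix.neg_apply, one_apply, hsign]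
    by_cases hkm : m = k
    · subst hkm
      simp [← mul_pow]
    · simp [hkm, Ne.symm hkm]
  have hinv : Z⁻¹ = -Z := inv_eq_right_inv (by rw [mul_neg, hZZ, neg_neg])
  have hanti : Z * J = -(J * Z) := by
    ext k m
    rw [Matrix.neg_apply, hZmul, hmulZ, hJ, hJ]
    have hk := hval k
    have hm := hval m
    have hupper : (k.rev : ℕ) + 1 = m ↔ (m.rev : ℕ) + 1 = k := by omega
    have hlower : (m : ℕ) + 1 = k.rev ↔ (k : ℕ) + 1 = m.rev := by omega
    simp only [hupper, hlower, Fin.rev_eq_iff (i := k)]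
    split_ifs with h₁ h₂ h₃ h₃
    · omega
    · rw [hsign, show (k : ℕ) = m.rev + 1 by omega, pow_succ, hsign]
      ring
    · rw [← hlower.mpr h₃, pow_succ]
      ring
    · rw [h₃, Fin.rev_rev, hγrev]
      push_cast
      ring
    · simp
  have hconj : Z⁻¹ * J * Z = -J := by
    rw [hinv, neg_mul, hanti, neg_neg, mul_assoc, hZZ, mul_neg, mul_one]
  have heven := charpoly_eval_neg_of_conj_eq_neg (by simp)
    (by rw [hinv, neg_mul, hZZ, neg_neg] : Z⁻¹ * Z = 1) hconj
  exact ⟨hZZ, hinv, hconj, heven, fun n hn => coeff_eq_zero_of_odd_of_eval_neg heven hn⟩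
end

section
/- Let S be the 2N×2N real matrix with entries S_{n,m} = sin(n·m·π/(2N+1)) for 1 ≤ n, m ≤ 2N. Then S·S = ((2N+1)/2)·I, so S is invertible with S^{−1} = (2/(2N+1))·S, and S diagonalizes H: S^{−1}·H·S is the diagonal matrix with diagonal entries 2·cos(m·π/(2N+1)) for m = 1, …, 2N; equivalently, for every m, the m-th column of S is an eigenvector of H with eigenvalue 2·cos(m·π/(2N+1)). -/
/-- The Dirichlet-type closed form of `∑ cos (k x)`, multiplied out. -/
theorem two_mul_sin_half_mul_sum_cos (x : ℝ) (n : ℕ) :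
    2 * Real.sin (x / 2) * ∑ k ∈ Finset.range n, Real.cos (k * x) =
      Real.sin (n * x - x / 2) + Real.sin (x / 2) := by
  induction n with
  | zero => simp [Real.sin_neg]
  | succ n ih =>
    have h : ((n + 1 : ℕ) : ℝ) * x - x / 2 = n * x + x / 2 := by push_cast; ring
    rw [Finset.sum_range_succ, mul_add, ih, h, Real.sin_add, Real.sin_sub]
    ring

theorem sum_cos_int_mul_pi_div (M : ℕ) (j : ℤ) (hj : j ≠ 0) (hjM : |j| < 2 * M) :
    ∑ k ∈ Finset.range M, Real.cos (k * (j * Real.pi / M)) =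
      (1 - Real.cos (j * Real.pi)) / 2 := by
  have hM : (0 : ℝ) < M := by
    have : (0 : ℤ) < M := by linarith [abs_nonneg j]
    exact_mod_cast this
  have hsin : Real.sin (j * Real.pi / M / 2) ≠ 0 := by
    intro h
    obtain ⟨n, hn⟩ := Real.sin_eq_zero_iff.mp h
    have hπ := Real.pi_pos
    have hjn : (j : ℝ) = n * (2 * M) := by
      field_simp at hn
      linarith
    have hjn' : j = n * (2 * M) := by exact_mod_cast hjn
    exact hj (Int.eq_zero_of_abs_lt_dvd ⟨n, by rw [hjn', mul_comm]⟩ hjM)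
  have h := two_mul_sin_half_mul_sum_cos (j * Real.pi / M) M
  rw [mul_div_cancel₀ _ hM.ne', Real.sin_sub, Real.sin_int_mul_pi] at h
  refine mul_left_cancel₀ (mul_ne_zero two_ne_zero hsin) (h.trans ?_)
  ring

/-- Discrete orthogonality of the sine vectors `k ↦ sin (k a π / M)`, `0 < a < M`. -/
theorem sum_sin_mul_sin (M a b : ℕ) (ha : 0 < a) (haM : a < M) (hb : 0 < b) (hbM : b < M) :
    ∑ k ∈ Finset.range M, Real.sin (k * (a * Real.pi / M)) * Real.sin (k * (b * Real.pi / M)) =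
      if a = b then (M : ℝ) / 2 else 0 := by
  have hprod : ∀ k : ℕ,
      Real.sin (k * (a * Real.pi / M)) * Real.sin (k * (b * Real.pi / M)) =
        (Real.cos (k * (((a - b : ℤ) : ℝ) * Real.pi / M)) -
          Real.cos (k * (((a + b : ℤ) : ℝ) * Real.pi / M))) / 2 := by
    intro k
    have h₁ : (k : ℝ) * (((a - b : ℤ) : ℝ) * Real.pi / M) =
        k * (a * Real.pi / M) - k * (b * Real.pi / M) := by push_cast; ring
    have h₂ : (k : ℝ) * (((a + b : ℤ) : ℝ) * Real.pi / M) =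
        k * (a * Real.pi / M) + k * (b * Real.pi / M) := by push_cast; ring
    rw [h₁, h₂, Real.cos_sub, Real.cos_add]
    ring
  have hcos : Real.cos (((a + b : ℤ) : ℝ) * Real.pi) = Real.cos (((a - b : ℤ) : ℝ) * Real.pi) := by
    push_cast
    rw [add_mul, sub_mul, Real.cos_add, Real.cos_sub, Real.sin_nat_mul_pi]
    ring
  have hadd := sum_cos_int_mul_pi_div M (a + b) (by omega) (by rw [abs_lt]; omega)
  rw [hcos] at hadd
  rw [Finset.sum_congr rfl fun k _ => hprod k, ← Finset.sum_div, Finset.sum_sub_distrib, hadd]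
  split_ifs with hab
  · subst hab
    simp
  · rw [sum_cos_int_mul_pi_div M (a - b) (by omega) (by rw [abs_lt]; omega)]
    simp

/-- The path-graph adjacency operator with Dirichlet boundary conditions. -/
theorem sum_adjacent_mul (n : ℕ) (f : ℕ → ℝ) (h₀ : f 0 = 0) (hn : f (n + 1) = 0) (k : Fin n) :
    ∑ l : Fin n, (if (k : ℕ) + 1 = (l : ℕ) then (1 : ℝ)
      else if (l : ℕ) + 1 = (k : ℕ) then 1 else 0) * f (l + 1) = f k + f (k + 2) := by
  obtain ⟨k, hk⟩ := k
  have hsplit : ∀ l : ℕ, (if k + 1 = l then (1 : ℝ) else if l + 1 = k then 1 else 0) * f (l + 1) =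
      (if l + 1 = k then f k else 0) + if k + 1 = l then f (k + 2) else 0 := by
    intro l
    split_ifs <;> first | omega | (subst_vars; simp)
  rw [Fin.sum_univ_eq_sum_range
    (fun l => (if k + 1 = l then (1 : ℝ) else if l + 1 = k then 1 else 0) * f (l + 1)) n,
    Finset.sum_congr rfl fun l _ => hsplit l, Finset.sum_add_distrib, Finset.sum_ite_eq]
  congr 1
  · rcases k with _ | k
    · simp [h₀]
    · simp [show k < n by omega]
  · simp only [Finset.mem_range]
    split_ifs with h
    · rfl
    · rw [← hn, show n = k + 1 by omega]

/-- Let `S` be the `2N × 2N` real matrix with entries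
`S_{n,m} = sin(n m π/(2N+1))` (written `0`-based: `S n m = sin((n+1)(m+1)π/(2N+1))`).
Then `S·S = ((2N+1)/2)·I`, so `S⁻¹ = (2/(2N+1))·S`, and `S` diagonalizes the free
coupling matrix `H`: `S⁻¹·H·S = diag(2cos(mπ/(2N+1)))_{m=1}^{2N}`; equivalently, each
column of `S` is an eigenvector of `H` with eigenvalue `2cos(mπ/(2N+1))`. -/
theorem stmt_3 (N : ℕ) (hN : 1 ≤ N)
    (H : Matrix (Fin (2 * N)) (Fin (2 * N)) ℝ)
    (hH : ∀ k m : Fin (2 * N), H k m =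
      if (k : ℕ) + 1 = (m : ℕ) then 1
      else if (m : ℕ) + 1 = (k : ℕ) then 1 else 0)
    (S : Matrix (Fin (2 * N)) (Fin (2 * N)) ℝ)
    (hS : ∀ n m : Fin (2 * N), S n m =
      Real.sin ((((n : ℕ) : ℝ) + 1) * (((m : ℕ) : ℝ) + 1) * Real.pi / (2 * (N : ℝ) + 1))) :
    S * S = ((2 * (N : ℝ) + 1) / 2) • (1 : Matrix (Fin (2 * N)) (Fin (2 * N)) ℝ) ∧
    S⁻¹ = (2 / (2 * (N : ℝ) + 1)) • S ∧
    S⁻¹ * H * S = Matrix.diagonal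
      (fun m : Fin (2 * N) => 2 * Real.cos ((((m : ℕ) : ℝ) + 1) * Real.pi / (2 * (N : ℝ) + 1))) ∧
    ∀ m : Fin (2 * N), H.mulVec (fun n => S n m) =
      (2 * Real.cos ((((m : ℕ) : ℝ) + 1) * Real.pi / (2 * (N : ℝ) + 1))) • (fun n => S n m) := by
  have hM : (0 : ℝ) < 2 * N + 1 := by positivity
  have hSS : S * S = ((2 * (N : ℝ) + 1) / 2) • (1 : Matrix (Fin (2 * N)) (Fin (2 * N)) ℝ) := by
    ext n m
    have h := sum_sin_mul_sin (2 * N + 1) (n + 1) (m + 1)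
      (by omega) (by omega) (by omega) (by omega)
    rw [Finset.sum_range_succ', ← Fin.sum_univ_eq_sum_range (fun k =>
      Real.sin (((k + 1 : ℕ) : ℝ) * (((n + 1 : ℕ) : ℝ) * Real.pi / ((2 * N + 1 : ℕ) : ℝ))) *
      Real.sin (((k + 1 : ℕ) : ℝ) * (((m + 1 : ℕ) : ℝ) * Real.pi / ((2 * N + 1 : ℕ) : ℝ))))] at h
    simp only [Nat.cast_zero, zero_mul, Real.sin_zero, add_zero] at h
    rw [Matrix.mul_apply, Matrix.smul_apply, Matrix.one_apply]
    convert h using 1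
    · refine Finset.sum_congr rfl fun k _ => ?_
      rw [hS, hS]
      push_cast
      congr 2 <;> ring
    · simp [Fin.ext_iff]
  have hleft : ((2 / (2 * (N : ℝ) + 1)) • S) * S = 1 := by
    rw [Matrix.smul_mul, hSS, smul_smul, div_mul_div_cancel₀ hM.ne', div_self two_ne_zero, one_smul]
  have hinv : S⁻¹ = (2 / (2 * (N : ℝ) + 1)) • S := Matrix.inv_eq_left_inv hleft
  have heig : ∀ m : Fin (2 * N), H.mulVec (fun n => S n m) =
      (2 * Real.cos ((((m : ℕ) : ℝ) + 1) * Real.pi / (2 * (N : ℝ) + 1))) • (fun n => S n m) := by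
    intro m
    ext n
    set x : ℝ := (((m : ℕ) : ℝ) + 1) * Real.pi / (2 * (N : ℝ) + 1) with hx
    have hSx : ∀ l : Fin (2 * N), S l m = Real.sin (((l + 1 : ℕ) : ℝ) * x) := by
      intro l
      rw [hS, hx]
      push_cast
      congr 1
      ring
    have hend : Real.sin (((2 * N + 1 : ℕ) : ℝ) * x) = 0 := by
      rw [show ((2 * N + 1 : ℕ) : ℝ) * x = ((m + 1 : ℕ) : ℝ) * Real.pi by
        rw [hx]; push_cast; field_simp]
      exact Real.sin_nat_mul_pi _
    have h := sum_adjacent_mul (2 * N) (fun l => Real.sin (l * x)) (by simp) hend n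
    simp only [Matrix.mulVec, dotProduct, hH, hSx, Pi.smul_apply, smul_eq_mul]
    refine h.trans ?_
    have h₁ : ((n : ℕ) : ℝ) * x = ((n + 1 : ℕ) : ℝ) * x - x := by push_cast; ring
    have h₂ : ((n + 2 : ℕ) : ℝ) * x = ((n + 1 : ℕ) : ℝ) * x + x := by push_cast; ring
    rw [h₁, h₂, Real.sin_sub, Real.sin_add]
    ring
  refine ⟨hSS, hinv, ?_, heig⟩
  have hHS : H * S = S * Matrix.diagonal
      (fun m : Fin (2 * N) => 2 * Real.cos ((((m : ℕ) : ℝ) + 1) * Real.pi / (2 * (N : ℝ) + 1))) := by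
    ext n m
    rw [Matrix.mul_diagonal, mul_comm (S n m)]
    exact congrFun (heig m) n
  rw [Matrix.mul_assoc, hHS, ← Matrix.mul_assoc, hinv, hleft, Matrix.one_mul]
end

section
/- Define Γ := max_{1 ≤ k ≤ 2N} |γ_k|. If Γ ≤ (1/(2N))·sin²(π/(2(2N+1))), then every eigenvalue of the matrix J is real. -/
open Finset Matrix

/-- The adjacency matrix of the path on `n` vertices. -/
def pathMatrix (n : ℕ) : Matrix (Fin n) (Fin n) ℂ := fun k m =>
  if (k : ℕ) + 1 = m then 1 else if (m : ℕ) + 1 = k then 1 else 0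

lemma pathMatrix_symm {n : ℕ} (k m : Fin n) : pathMatrix n k m = pathMatrix n m k := by
  unfold pathMatrix
  split_ifs <;> rfl

/-- The path matrix acts on a sequence vanishing at `0` and `n + 1` as the symmetric
second-order shift. -/
lemma pathMatrix_sum {n : ℕ} (f : ℕ → ℂ) (h0 : f 0 = 0) (hn : f (n + 1) = 0) (k : Fin n) :
    ∑ m : Fin n, pathMatrix n k m * f (m + 1) = f k + f (k + 2) := by
  have hsplit : ∀ m : Fin n, pathMatrix n k m * f (m + 1) =
      (if (m : ℕ) + 1 = k then f k else 0) + (if (k : ℕ) + 1 = m then f (k + 2) else 0) := by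
    intro m
    unfold pathMatrix
    split_ifs with h₁ h₂ h₂
    · omega
    · simp [← h₁]
    · simp [h₂]
    · simp
  rw [sum_congr rfl fun m _ => hsplit m, sum_add_distrib]
  have hk := k.isLt
  congr 1
  · rcases Nat.eq_zero_or_pos (k : ℕ) with h | h
    · simp [h, h0]
    · rw [sum_eq_single (⟨k - 1, by omega⟩ : Fin n)]
      · rw [if_pos (by simp only; omega)]
      · intro m _ hm
        rw [if_neg fun h' => hm (Fin.ext (by simp only; omega))]
      · simp
  · by_cases h : (k : ℕ) + 1 < n
    · rw [sum_eq_single (⟨k + 1, h⟩ : Fin n)]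
      · simp
      · intro m _ hm
        rw [if_neg fun h' => hm (Fin.ext h'.symm)]
      · simp
    · rw [show (k : ℕ) + 2 = n + 1 by omega, hn]
      simp

/-- The angle `(j + 1) π / (n + 1)` whose doubled cosine is an eigenvalue of the path matrix. -/
noncomputable def pathAngle (n j : ℕ) : ℝ := (j + 1) * Real.pi / (n + 1)

lemma pathMatrix_mul_sin {n : ℕ} (j : ℕ) (k : Fin n) :
    ∑ m : Fin n, pathMatrix n k m * ((Real.sin (((m : ℕ) + 1) * pathAngle n j) : ℝ) : ℂ) =
      ((2 * Real.cos (pathAngle n j) : ℝ) : ℂ) *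
        ((Real.sin (((k : ℕ) + 1) * pathAngle n j) : ℝ) : ℂ) := by
  have hn : Real.sin (((n + 1 : ℕ) : ℝ) * pathAngle n j) = 0 := by
    rw [show ((n + 1 : ℕ) : ℝ) * pathAngle n j = ((j + 1 : ℕ) : ℝ) * Real.pi by
      unfold pathAngle; push_cast; field_simp]
    exact Real.sin_nat_mul_pi _
  have h := pathMatrix_sum (n := n)
    (fun m => ((Real.sin ((m : ℝ) * pathAngle n j) : ℝ) : ℂ)) (by simp)
    (Complex.ofReal_eq_zero.mpr hn) k
  simp only [Nat.cast_add, Nat.cast_one, Nat.cast_ofNat] at h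
  rw [h, ← Complex.ofReal_add, ← Complex.ofReal_mul]
  congr 1
  rw [show ((k : ℕ) : ℝ) * pathAngle n j = ((k : ℕ) + 1) * pathAngle n j - pathAngle n j by ring,
    show (((k : ℕ) : ℝ) + 2) * pathAngle n j = ((k : ℕ) + 1) * pathAngle n j + pathAngle n j by ring,
    Real.sin_sub, Real.sin_add]
  ring

lemma sin_le_sin_of_mem_Icc {θ x : ℝ} (h0 : 0 ≤ θ) (h1 : θ ≤ x) (h2 : x ≤ Real.pi - θ) :
    Real.sin θ ≤ Real.sin x := by
  rcases le_total x (Real.pi / 2) with h | h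
  · exact Real.sin_le_sin_of_le_of_le_pi_div_two (by linarith [Real.pi_pos]) h h1
  · rw [← Real.sin_pi_sub x]
    exact Real.sin_le_sin_of_le_of_le_pi_div_two (by linarith [Real.pi_pos]) (by linarith)
      (by linarith)

/-- Distinct eigenvalues of the path matrix are at least `4 sin² (π / (2 (n + 1)))` apart. -/
lemma pathEigenvalue_sub_le {n j k : ℕ} (hjk : j < k) (hk : k < n) :
    4 * Real.sin (Real.pi / (2 * ((n : ℝ) + 1))) ^ 2 ≤
      2 * Real.cos (pathAngle n j) - 2 * Real.cos (pathAngle n k) := by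
  set θ := Real.pi / (2 * ((n : ℝ) + 1)) with hθ
  have hθ0 : 0 < θ := by positivity
  have hpi : Real.pi = 2 * (n + 1) * θ := by rw [hθ]; field_simp
  have hjk' : (j : ℝ) + 1 ≤ k := by exact_mod_cast hjk
  have hk' : (k : ℝ) + 1 ≤ n := by exact_mod_cast hk
  have hj0 : (0 : ℝ) ≤ j := Nat.cast_nonneg j
  have hangle : ∀ i : ℕ, pathAngle n i = 2 * (i + 1) * θ := by
    intro i
    unfold pathAngle
    rw [hθ]
    field_simp
  have hdiff : 2 * Real.cos (pathAngle n j) - 2 * Real.cos (pathAngle n k) =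
      4 * (Real.sin ((j + k + 2) * θ) * Real.sin ((k - j) * θ)) := by
    rw [← mul_sub, Real.cos_sub_cos, hangle, hangle,
      show (2 * ((j : ℝ) + 1) * θ + 2 * (k + 1) * θ) / 2 = (j + k + 2) * θ by ring,
      show (2 * ((j : ℝ) + 1) * θ - 2 * (k + 1) * θ) / 2 = -((k - j) * θ) by ring, Real.sin_neg]
    ring
  have hsin0 : 0 ≤ Real.sin θ :=
    Real.sin_nonneg_of_nonneg_of_le_pi hθ0.le (by rw [hpi]; nlinarith)
  have h₁ : Real.sin θ ≤ Real.sin ((j + k + 2) * θ) :=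
    sin_le_sin_of_mem_Icc hθ0.le (by nlinarith) (by rw [hpi]; nlinarith)
  have h₂ : Real.sin θ ≤ Real.sin ((k - j) * θ) :=
    sin_le_sin_of_mem_Icc hθ0.le (by nlinarith) (by rw [hpi]; nlinarith)
  rw [hdiff, sq]
  have := mul_le_mul h₁ h₂ hsin0 (hsin0.trans h₁)
  linarith

lemma sin_pi_div_pos (n : ℕ) : 0 < Real.sin (Real.pi / (2 * ((n : ℝ) + 1))) := by
  apply Real.sin_pos_of_pos_of_lt_pi (by positivity)
  rw [div_lt_iff₀ (by positivity)]
  have : (0 : ℝ) ≤ n := Nat.cast_nonneg n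
  nlinarith [Real.pi_pos]

lemma pathEigenvalue_gap {n : ℕ} {j k : Fin n} (hjk : j ≠ k) :
    4 * Real.sin (Real.pi / (2 * ((n : ℝ) + 1))) ^ 2 ≤
      |2 * Real.cos (pathAngle n j) - 2 * Real.cos (pathAngle n k)| := by
  rcases lt_or_gt_of_ne hjk with h | h
  · exact (pathEigenvalue_sub_le h k.isLt).trans (le_abs_self _)
  · rw [abs_sub_comm]
    exact (pathEigenvalue_sub_le h j.isLt).trans (le_abs_self _)

/-- The discrete sine vectors are orthogonal for different frequencies. -/
lemma sum_sin_mul_sin_s4 {n : ℕ} {j k : Fin n} (hjk : j ≠ k) :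
    ∑ m : Fin n, ((Real.sin (((m : ℕ) + 1) * pathAngle n j) : ℝ) : ℂ) *
      ((Real.sin (((m : ℕ) + 1) * pathAngle n k) : ℝ) : ℂ) = 0 := by
  set u : Fin n → Fin n → ℂ :=
    fun i m => ((Real.sin (((m : ℕ) + 1) * pathAngle n i) : ℝ) : ℂ)
  have hA : ∀ i m, ∑ l, pathMatrix n m l * u i l =
    ((2 * Real.cos (pathAngle n i) : ℝ) : ℂ) * u i m := fun i m => pathMatrix_mul_sin i m
  have hne : ((2 * Real.cos (pathAngle n j) : ℝ) : ℂ) - ((2 * Real.cos (pathAngle n k) : ℝ) : ℂ)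
      ≠ 0 := by
    rw [← Complex.ofReal_sub, Complex.ofReal_ne_zero, ← abs_pos]
    have := sin_pi_div_pos n
    exact lt_of_lt_of_le (by positivity) (pathEigenvalue_gap hjk)
  have h : ∑ m, (∑ l, pathMatrix n m l * u j l) * u k m =
      ∑ m, u j m * ∑ l, pathMatrix n m l * u k l := by
    simp only [sum_mul, mul_sum]
    rw [sum_comm]
    refine sum_congr rfl fun m _ => sum_congr rfl fun l _ => ?_
    rw [pathMatrix_symm l m]
    ring
  simp only [hA] at h
  have h' : (((2 * Real.cos (pathAngle n j) : ℝ) : ℂ) -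
      ((2 * Real.cos (pathAngle n k) : ℝ) : ℂ)) * ∑ m, u j m * u k m = 0 := by
    rw [sub_mul, sub_eq_zero, mul_sum, mul_sum]
    convert h using 2 <;> ring
  exact (mul_eq_zero.mp h').resolve_left hne

/-- The normalized discrete sine vectors form an orthonormal basis. -/
lemma exists_sine_orthonormalBasis (n : ℕ) :
    ∃ b : OrthonormalBasis (Fin n) ℂ (EuclideanSpace ℂ (Fin n)), ∀ j, ∃ r : ℝ, ∀ k : Fin n,
      b j k = ((r * Real.sin (((k : ℕ) + 1) * pathAngle n j) : ℝ) : ℂ) := by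
  set u : Fin n → EuclideanSpace ℂ (Fin n) := fun j =>
    WithLp.toLp 2 fun k => ((Real.sin (((k : ℕ) + 1) * pathAngle n j) : ℝ) : ℂ) with hu
  have hu0 : ∀ j, u j ≠ 0 := by
    intro j h
    have hn : 0 < n := j.pos
    have h0 := congrArg (fun x : EuclideanSpace ℂ (Fin n) => x ⟨0, hn⟩) h
    have hpos : 0 < Real.sin (pathAngle n j) := by
      have hj : ((j : ℕ) : ℝ) + 1 ≤ n := by exact_mod_cast j.isLt
      apply Real.sin_pos_of_pos_of_lt_pi
      · unfold pathAngle; positivity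
      · unfold pathAngle
        rw [div_lt_iff₀ (by positivity)]
        nlinarith [Real.pi_pos]
    simp only [hu, PiLp.zero_apply, Complex.ofReal_eq_zero] at h0
    simp at h0
    exact hpos.ne' h0
  have horth : Orthonormal ℂ fun j => (((‖u j‖⁻¹ : ℝ) : ℂ) • u j) := by
    constructor
    · intro j
      rw [norm_smul, Complex.norm_real, norm_inv, norm_norm,
        inv_mul_cancel₀ (norm_ne_zero_iff.mpr (hu0 j))]
    · intro j k hjk
      have : inner ℂ (u j) (u k) = 0 := by
        rw [PiLp.inner_apply, ← sum_sin_mul_sin_s4 hjk.symm]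
        refine sum_congr rfl fun m _ => ?_
        simp only [hu, RCLike.inner_apply, Complex.conj_ofReal]
      simp only [inner_smul_left, inner_smul_right, this, mul_zero]
  obtain ⟨b, hb⟩ := Orthonormal.exists_orthonormalBasis_extension_of_card_eq
    (𝕜 := ℂ) (ι := Fin n) (E := EuclideanSpace ℂ (Fin n)) (by simp) (s := Set.univ)
    (v := fun j => (((‖u j‖⁻¹ : ℝ) : ℂ) • u j)) (horth.comp _ Subtype.val_injective)
  refine ⟨b, fun j => ⟨‖u j‖⁻¹, fun k => ?_⟩⟩
  rw [hb j trivial, PiLp.smul_apply, smul_eq_mul, Complex.ofReal_mul]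

/-- Reflecting the path multiplies a sine vector by `± 1`. -/
lemma sin_rev {n : ℕ} (j : ℕ) (k : Fin n) :
    Real.sin (((Fin.rev k : ℕ) + 1) * pathAngle n j) =
      (-1) ^ j * Real.sin (((k : ℕ) + 1) * pathAngle n j) := by
  have hk : ((Fin.rev k : ℕ) : ℝ) + 1 = n - k := by
    have h : (Fin.rev k : ℕ) + 1 + k = n := by rw [Fin.val_rev]; omega
    rw [eq_sub_iff_add_eq]
    exact_mod_cast h
  rw [hk, show ((n : ℝ) - (k : ℕ)) * pathAngle n j =
    ((j + 1 : ℕ) : ℝ) * Real.pi - ((k : ℕ) + 1) * pathAngle n j by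
      unfold pathAngle; push_cast; field_simp; ring, Real.sin_nat_mul_pi_sub, pow_succ]
  ring

/-- Nonnegative weights concentrated near a point of a `g`-separated spectrum cannot be balanced
by signs unless they all vanish. -/
lemma sum_eq_zero_of_signed_sum_eq_zero {ι : Type*} [Fintype ι] [DecidableEq ι]
    (w ev ε : ι → ℝ) (x g : ℝ) (hg : 0 < g) (hw : ∀ j, 0 ≤ w j) (hε : ∀ j, |ε j| = 1)
    (hgap : ∀ j k, j ≠ k → g ≤ |ev j - ev k|) (hsum : ∑ j, ε j * w j = 0)
    (hres : ∑ j, (ev j - x) ^ 2 * w j ≤ (g / 8) ^ 2 * ∑ j, w j) : ∑ j, w j = 0 := by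
  have hT : 0 ≤ ∑ j, w j := sum_nonneg fun j _ => hw j
  have hfar : ∀ s : Finset ι, (∀ j ∈ s, g / 2 ≤ |ev j - x|) →
      (g / 2) ^ 2 * ∑ j ∈ s, w j ≤ (g / 8) ^ 2 * ∑ j, w j := by
    intro s hs
    refine le_trans ?_ hres
    rw [mul_sum]
    refine (sum_le_sum fun j hj => ?_).trans
      (sum_le_sum_of_subset_of_nonneg (subset_univ s) fun j _ _ =>
        mul_nonneg (sq_nonneg _) (hw j))
    refine mul_le_mul_of_nonneg_right ?_ (hw j)
    rw [← sq_abs (ev j - x)]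
    exact pow_le_pow_left₀ (by positivity) (hs j hj) 2
  by_cases h : ∃ i, |ev i - x| < g / 2
  · obtain ⟨i, hi⟩ := h
    have h₁ := hfar (univ.erase i) fun j hj => by
      have h₂ := hgap j i (ne_of_mem_erase hj)
      have h₃ := abs_sub_le (ev j) x (ev i)
      rw [abs_sub_comm x] at h₃
      linarith
    have hi' : w i ≤ ∑ j ∈ univ.erase i, w j := by
      rw [← add_sum_erase _ _ (mem_univ i), add_eq_zero_iff_eq_neg] at hsum
      calc w i = |ε i * w i| := by rw [abs_mul, hε, one_mul, abs_of_nonneg (hw i)]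
        _ = |∑ j ∈ univ.erase i, ε j * w j| := by rw [hsum, abs_neg]
        _ ≤ ∑ j ∈ univ.erase i, |ε j * w j| := abs_sum_le_sum_abs _ _
        _ = ∑ j ∈ univ.erase i, w j :=
          sum_congr rfl fun j _ => by rw [abs_mul, hε, one_mul, abs_of_nonneg (hw j)]
    have hadd := add_sum_erase univ w (mem_univ i)
    nlinarith [pow_pos hg 2]
  · push Not at h
    have h₁ := hfar univ fun j _ => h j
    nlinarith [pow_pos hg 2]

/-- unbroken PT symmetry: with `Γ := max_{1 ≤ k ≤ 2N} |γ_k|`, if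
`Γ ≤ (1/(2N)) sin²(π/(2(2N+1)))`, then every eigenvalue of the matrix `J` is real. -/
theorem stmt_4 (N : ℕ) (hN : 1 ≤ N) (γ : Fin (2 * N) → ℝ)
    (hγ : ∀ k : Fin (2 * N), γ k = - γ ⟨2 * N - 1 - (k : ℕ), by have := k.isLt; omega⟩)
    (J : Matrix (Fin (2 * N)) (Fin (2 * N)) ℂ)
    (hJ : ∀ k m : Fin (2 * N), J k m =
      if (k : ℕ) + 1 = (m : ℕ) then 1
      else if (m : ℕ) + 1 = (k : ℕ) then 1
      else if k = m then Complex.I * (γ k : ℂ) else 0)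
    (hΓ : (Finset.univ.sup' (Finset.univ_nonempty_iff.mpr ⟨⟨0, by omega⟩⟩)
        fun k : Fin (2 * N) => |γ k|) ≤
      (1 / (2 * (N : ℝ))) * Real.sin (Real.pi / (2 * (2 * (N : ℝ) + 1))) ^ 2) :
    ∀ μ : ℂ, μ ∈ spectrum ℂ J → μ.im = 0 := by
  intro μ hμ
  by_contra him
  obtain ⟨v, hv, hv0⟩ : ∃ v : Fin (2 * N) → ℂ, J *ᵥ v = μ • v ∧ v ≠ 0 := by
    rw [← Matrix.spectrum_toLin', ← Module.End.hasEigenvalue_iff_mem_spectrum] at hμ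
    obtain ⟨v, hv⟩ := hμ.exists_hasEigenvector
    exact ⟨v, by simpa using hv.apply_eq_smul, hv.2⟩
  have hrev : ∀ k, γ (Fin.rev k) = -γ k := by
    intro k
    rw [hγ k, neg_neg]
    congr 1
    ext
    simp only [Fin.val_rev]
    omega
  have hJpath : ∀ k m, J k m =
      pathMatrix (2 * N) k m + if k = m then Complex.I * γ k else 0 := by
    intro k m
    rw [hJ]
    unfold pathMatrix
    split_ifs <;> first | omega | simp
  have hJsymm : ∀ k m, J k m = J m k := by
    intro k m
    rw [hJpath, hJpath, pathMatrix_symm]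
    by_cases h : k = m
    · rw [h]
    · rw [if_neg h, if_neg (Ne.symm h)]
  have hJrev : ∀ k m, J k (Fin.rev m) = starRingEnd ℂ (J (Fin.rev k) m) := by
    intro k m
    have hk := k.isLt
    have hm := m.isLt
    rw [hJ, hJ]
    simp only [Fin.ext_iff, Fin.val_rev, hrev]
    split_ifs <;> first | omega | simp
  have hJv : ∀ k, ∑ m, J k m * v m = μ * v k := fun k => congrFun hv k
  have hJw : ∀ k, ∑ m, J k m * starRingEnd ℂ (v (Fin.rev m)) =
      starRingEnd ℂ μ * starRingEnd ℂ (v (Fin.rev k)) := by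
    intro k
    rw [← map_mul, ← hJv, map_sum, ← Equiv.sum_comp Fin.revPerm]
    simp only [Fin.revPerm_apply, Fin.rev_rev, hJrev, map_mul]
  have hbal : ∑ k, v k * starRingEnd ℂ (v (Fin.rev k)) = 0 := by
    have h : ∑ k, (∑ m, J k m * v m) * starRingEnd ℂ (v (Fin.rev k)) =
        ∑ k, v k * ∑ m, J k m * starRingEnd ℂ (v (Fin.rev m)) := by
      simp only [sum_mul, mul_sum]
      rw [sum_comm]
      refine sum_congr rfl fun m _ => sum_congr rfl fun l _ => ?_
      rw [hJsymm l m]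
      ring
    simp only [hJv, hJw] at h
    have h' : (μ - starRingEnd ℂ μ) * ∑ k, v k * starRingEnd ℂ (v (Fin.rev k)) = 0 := by
      rw [sub_mul, sub_eq_zero, mul_sum, mul_sum]
      convert h using 2 <;> ring
    refine (mul_eq_zero.mp h').resolve_left fun h₀ => him ?_
    exact Complex.conj_eq_iff_im.mp (sub_eq_zero.mp h₀).symm
  have hpath : ∀ k, ∑ m, pathMatrix (2 * N) k m * v m = μ * v k - Complex.I * γ k * v k := by
    intro k
    rw [← hJv]
    simp [hJpath, add_mul, sum_add_distrib]
  set θ := Real.pi / (2 * (((2 * N : ℕ) : ℝ) + 1)) with hθ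
  have hθ0 : 0 < Real.sin θ := sin_pi_div_pos (2 * N)
  have hγle : ∀ k, |γ k| ≤ 4 * Real.sin θ ^ 2 / 8 := by
    intro k
    refine ((Finset.le_sup' (fun k => |γ k|) (mem_univ k)).trans hΓ).trans ?_
    rw [show Real.pi / (2 * (2 * (N : ℝ) + 1)) = θ by rw [hθ]; push_cast; rfl]
    have hN' : (1 : ℝ) ≤ N := by exact_mod_cast hN
    have : 1 / (2 * (N : ℝ)) ≤ 1 / 2 := one_div_le_one_div_of_le (by norm_num) (by linarith)
    nlinarith [pow_pos hθ0 2]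
  obtain ⟨b, hb⟩ := exists_sine_orthonormalBasis (2 * N)
  choose r hr using hb
  have hinner : ∀ j (x : EuclideanSpace ℂ (Fin (2 * N))), inner ℂ (b j) x = ∑ k, b j k * x k := by
    intro j x
    rw [PiLp.inner_apply]
    refine sum_congr rfl fun k _ => ?_
    rw [RCLike.inner_apply, hr, Complex.conj_ofReal, mul_comm]
  set x : EuclideanSpace ℂ (Fin (2 * N)) := WithLp.toLp 2 v with hx
  set y : EuclideanSpace ℂ (Fin (2 * N)) := WithLp.toLp 2 fun k => Complex.I * γ k * v k with hy
  set z : EuclideanSpace ℂ (Fin (2 * N)) := WithLp.toLp 2 fun k => v (Fin.rev k) with hz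
  have hcy : ∀ j, inner ℂ (b j) y =
      (μ - ((2 * Real.cos (pathAngle (2 * N) j) : ℝ) : ℂ)) * inner ℂ (b j) x := by
    intro j
    have hbj : ∀ m, ∑ k, pathMatrix (2 * N) m k * b j k =
        ((2 * Real.cos (pathAngle (2 * N) j) : ℝ) : ℂ) * b j m := by
      intro m
      simp only [hr, Complex.ofReal_mul (r j), mul_left_comm _ ((r j : ℝ) : ℂ), ← mul_sum,
        pathMatrix_mul_sin]
    have hadj : ∑ k, b j k * ∑ m, pathMatrix (2 * N) k m * v m =
        ∑ m, (∑ k, pathMatrix (2 * N) m k * b j k) * v m := by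
      simp only [sum_mul, mul_sum]
      rw [sum_comm]
      refine sum_congr rfl fun m _ => sum_congr rfl fun l _ => ?_
      rw [pathMatrix_symm l m]
      ring
    simp only [hpath, hbj, mul_sub, sum_sub_distrib, mul_assoc, ← mul_sum] at hadj
    rw [hinner, hinner, sub_mul, mul_sum]
    simp only [hx, hy, mul_assoc, mul_left_comm _ μ, ← mul_sum] at hadj ⊢
    linear_combination -hadj
  have hcz : ∀ j, inner ℂ (b j) z = (-1) ^ (j : ℕ) * inner ℂ (b j) x := by
    intro j
    rw [hinner, hinner, mul_sum, ← Equiv.sum_comp Fin.revPerm]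
    refine sum_congr rfl fun k _ => ?_
    simp only [hz, hx, Fin.revPerm_apply, Fin.rev_rev, hr, sin_rev]
    push_cast
    ring
  have hsigned : ∑ j : Fin (2 * N), (-1 : ℝ) ^ (j : ℕ) * ‖inner ℂ (b j) x‖ ^ 2 = 0 := by
    have h : inner ℂ z x = 0 := by
      rw [PiLp.inner_apply, ← hbal]
      rfl
    rw [← b.sum_inner_mul_inner] at h
    rw [← Complex.ofReal_eq_zero, ← h, Complex.ofReal_sum]
    refine sum_congr rfl fun j _ => ?_
    rw [← inner_conj_symm z, hcz, map_mul, mul_assoc, Complex.conj_mul']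
    simp
  have hnorm : ‖y‖ ^ 2 ≤ (4 * Real.sin θ ^ 2 / 8) ^ 2 * ‖x‖ ^ 2 := by
    rw [EuclideanSpace.norm_sq_eq, EuclideanSpace.norm_sq_eq, mul_sum]
    refine sum_le_sum fun k _ => ?_
    simp only [hy, hx, norm_mul, Complex.norm_I, one_mul, Complex.norm_real, Real.norm_eq_abs,
      mul_pow |γ k|]
    gcongr
    exact hγle k
  have hzero := sum_eq_zero_of_signed_sum_eq_zero (fun j => ‖inner ℂ (b j) x‖ ^ 2)
    (fun j : Fin (2 * N) => 2 * Real.cos (pathAngle (2 * N) j)) (fun j => (-1) ^ (j : ℕ)) μ.re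
    (4 * Real.sin θ ^ 2) (by positivity) (fun j => by positivity) (fun j => by simp)
    (fun j k hjk => pathEigenvalue_gap hjk) hsigned (by
      rw [b.sum_sq_norm_inner_right]
      refine le_trans ?_ hnorm
      rw [← b.sum_sq_norm_inner_right y]
      refine sum_le_sum fun j _ => ?_
      rw [hcy, norm_mul, mul_pow]
      refine mul_le_mul_of_nonneg_right ?_ (by positivity)
      rw [← sq_abs, abs_sub_comm]
      refine pow_le_pow_left₀ (abs_nonneg _) ?_ 2
      simpa only [Complex.sub_re, Complex.ofReal_re] using Complex.abs_re_le_norm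
        (μ - ((2 * Real.cos (pathAngle (2 * N) j) : ℝ) : ℂ)))
  rw [b.sum_sq_norm_inner_right, sq_eq_zero_iff, norm_eq_zero] at hzero
  exact hv0 (congrArg WithLp.ofLp hzero)
end

section
/- If Σ_{k=1}^{2N} γ_k² > 2·(2N − 1), then J has an eigenvalue λ with Im(λ) ≠ 0; in particular, since non-real eigenvalues of J occur together with their complex conjugates, J has at least two distinct eigenvalues with nonzero imaginary part. -/
/-- A complex square matrix whose square has trace with negative real part has a non-real
eigenvalue. -/
theorem Matrix.exists_mem_spectrum_im_ne_zero_of_trace_sq_re_neg {n : Type*} [Fintype n]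
    [DecidableEq n] (A : Matrix n n ℂ) (h : (A ^ 2).trace.re < 0) :
    ∃ z ∈ spectrum ℂ A, z.im ≠ 0 := by
  by_contra! hreal
  refine h.not_ge ?_
  have hroots : ∀ w ∈ (A ^ 2).charpoly.roots, 0 ≤ w.re := by
    intro w hw
    have hw' : w ∈ spectrum ℂ (A ^ 2) :=
      Matrix.mem_spectrum_of_isRoot_charpoly (Polynomial.isRoot_of_mem_roots hw)
    rw [spectrum.map_pow_of_pos A two_pos] at hw'
    obtain ⟨z, hz, rfl⟩ := hw'
    simpa [pow_two, hreal z hz] using mul_self_nonneg z.re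
  rw [Matrix.trace_eq_sum_roots_charpoly, ← Complex.coe_reAddGroupHom, map_multiset_sum]
  refine Multiset.sum_nonneg fun x hx => ?_
  obtain ⟨w, hw, rfl⟩ := Multiset.mem_map.mp hx
  exact hroots w hw

/-- There are `n` pairs of consecutive elements in `Fin (n + 1)`. -/
theorem Fin.sum_sum_ite_succ_eq (n : ℕ) :
    ∑ k : Fin (n + 1), ∑ m : Fin (n + 1), (if (k : ℕ) + 1 = m then (1 : ℝ) else 0) = n := by
  have hrow : ∀ k : Fin (n + 1),
      ∑ m : Fin (n + 1), (if (k : ℕ) + 1 = m then (1 : ℝ) else 0) =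
        if (k : ℕ) < n then 1 else 0 := by
    intro k
    rw [Fin.sum_univ_eq_sum_range (fun m => if (k : ℕ) + 1 = m then (1 : ℝ) else 0),
      Finset.sum_ite_eq]
    simp
  simp_rw [hrow]
  rw [Fin.sum_univ_eq_sum_range (fun k => if k < n then (1 : ℝ) else 0), Finset.sum_range_succ,
    Finset.sum_congr rfl fun k hk => if_pos (Finset.mem_range.mp hk)]
  simp

/-- broken PT symmetry, part 1: if `Σ_{k=1}^{2N} γ_k² > 2(2N − 1)`, then `J` has
an eigenvalue with nonzero imaginary part; in particular, since non-real eigenvalues of `J`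
occur together with their complex conjugates, `J` has at least two distinct eigenvalues with
nonzero imaginary part. -/
theorem stmt_5 (N : ℕ) (hN : 1 ≤ N) (γ : Fin (2 * N) → ℝ)
    (hγ : ∀ k : Fin (2 * N), γ k = - γ ⟨2 * N - 1 - (k : ℕ), by have := k.isLt; omega⟩)
    (J : Matrix (Fin (2 * N)) (Fin (2 * N)) ℂ)
    (hJ : ∀ k m : Fin (2 * N), J k m =
      if (k : ℕ) + 1 = (m : ℕ) then 1
      else if (m : ℕ) + 1 = (k : ℕ) then 1
      else if k = m then Complex.I * (γ k : ℂ) else 0)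
    (hsum : (∑ k : Fin (2 * N), (γ k) ^ 2) > 2 * (2 * (N : ℝ) - 1)) :
    (∃ lam : ℂ, lam ∈ spectrum ℂ J ∧ lam.im ≠ 0 ∧ (starRingEnd ℂ) lam ∈ spectrum ℂ J) ∧
    (∃ lam₁ lam₂ : ℂ, lam₁ ≠ lam₂ ∧ lam₁ ∈ spectrum ℂ J ∧ lam₂ ∈ spectrum ℂ J ∧
      lam₁.im ≠ 0 ∧ lam₂.im ≠ 0) := by
  have htrace : (J ^ 2).trace.re = 2 * (2 * (N : ℝ) - 1) - ∑ k, γ k ^ 2 := by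
    have hentry : ∀ k m, (J k m * J m k).re =
        (if (k : ℕ) + 1 = m then (1 : ℝ) else 0) + (if (m : ℕ) + 1 = k then 1 else 0) -
          if k = m then γ k ^ 2 else 0 := by
      intro k m
      rw [hJ k m, hJ m k]
      by_cases hkm : k = m
      · subst hkm
        simp [pow_two]
      · simp only [hkm, Ne.symm hkm, if_false]
        split_ifs <;> first | omega | simp
    have hpairs : ∑ k : Fin (2 * N), ∑ m : Fin (2 * N),
        (if (k : ℕ) + 1 = m then (1 : ℝ) else 0) = 2 * N - 1 := by
      obtain ⟨M, rfl⟩ : ∃ M, N = M + 1 := ⟨N - 1, by omega⟩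
      refine (Fin.sum_sum_ite_succ_eq (2 * M + 1)).trans ?_
      push_cast
      ring
    simp only [Matrix.trace, Matrix.diag, pow_two J, Matrix.mul_apply, Complex.re_sum, hentry,
      Finset.sum_sub_distrib, Finset.sum_add_distrib]
    rw [Finset.sum_comm (f := fun k m : Fin (2 * N) => if (m : ℕ) + 1 = k then (1 : ℝ) else 0),
      hpairs]
    simp only [Finset.sum_ite_eq, Finset.mem_univ, if_true]
    ring
  have hstar : star J = Matrix.reindexAlgEquiv ℂ ℂ Fin.revPerm J := by
    ext k m
    have hrev : γ k.rev = -γ k := by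
      rw [hγ k, neg_neg]
      congr 1
      ext
      simp only [Fin.val_rev]
      omega
    have hk := k.isLt
    have hm := m.isLt
    simp only [Matrix.star_apply, Matrix.coe_reindexAlgEquiv, Matrix.reindex_apply,
      Matrix.submatrix_apply, Fin.revPerm_symm, Fin.revPerm_apply, hJ, hrev, Fin.val_rev,
      Fin.rev_inj]
    by_cases hkm : k = m
    · subst hkm
      simp
    · simp only [hkm, Ne.symm hkm, if_false]
      split_ifs <;> first | omega | simp
  have hconj : ∀ z ∈ spectrum ℂ J, (starRingEnd ℂ) z ∈ spectrum ℂ J := by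
    intro z hz
    rw [← AlgEquiv.spectrum_eq (Matrix.reindexAlgEquiv ℂ ℂ Fin.revPerm) J, ← hstar,
      spectrum.map_star, Set.mem_star]
    simpa using hz
  obtain ⟨z, hz, him⟩ :=
    Matrix.exists_mem_spectrum_im_ne_zero_of_trace_sq_re_neg J (by rw [htrace]; linarith)
  exact ⟨⟨z, hz, him, hconj z hz⟩, z, (starRingEnd ℂ) z,
    fun h => him (Complex.conj_eq_iff_im.mp h.symm), hz, hconj z hz, him, by simpa using him⟩
end

section
/- If |γ_1| > 1, |γ_{2N}| > 1, and |γ_k| > 2 for every k with 2 ≤ k ≤ 2N−1, then the matrix J has no real eigenvalue. -/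
/-- A point of the spectrum of a complex matrix lies in one of its closed Gershgorin discs. -/
theorem exists_mem_closedBall_of_mem_spectrum {n : Type*} [Fintype n] [DecidableEq n]
    {A : Matrix n n ℂ} {μ : ℂ} (hμ : μ ∈ spectrum ℂ A) :
    ∃ k, μ ∈ Metric.closedBall (A k k) (∑ j ∈ Finset.univ.erase k, ‖A k j‖) := by
  rw [← Matrix.spectrum_toLin', ← Module.End.hasEigenvalue_iff_mem_spectrum] at hμ
  exact eigenvalue_mem_ball hμ

/-- A closed disc centred on the imaginary axis at `I * g` with radius less than `|g|` contains
no real point. -/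
theorem im_ne_zero_of_mem_closedBall {μ : ℂ} {g r : ℝ}
    (hμ : μ ∈ Metric.closedBall (Complex.I * (g : ℂ)) r) (hr : r < |g|) : μ.im ≠ 0 := by
  intro h0
  rw [mem_closedBall_iff_norm] at hμ
  have him := Complex.abs_im_le_norm (μ - Complex.I * (g : ℂ))
  simp only [Complex.sub_im, Complex.I_mul_im, Complex.ofReal_re, h0, zero_sub, abs_neg] at him
  linarith

theorem sum_ite_val_succ_eq_le {n : ℕ} (k : Fin n) :
    ∑ j : Fin n, (if (k : ℕ) + 1 = (j : ℕ) then (1 : ℝ) else 0) ≤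
      if (k : ℕ) + 1 < n then 1 else 0 := by
  split_ifs with h
  · rw [Finset.sum_eq_single ⟨(k : ℕ) + 1, h⟩] <;> simp +contextual [Fin.ext_iff, eq_comm]
  · exact (Finset.sum_eq_zero fun j _ => if_neg (by have := j.isLt; omega)).le

theorem sum_ite_succ_val_eq_le {n : ℕ} (k : Fin n) :
    ∑ j : Fin n, (if (j : ℕ) + 1 = (k : ℕ) then (1 : ℝ) else 0) ≤
      if 0 < (k : ℕ) then 1 else 0 := by
  split_ifs with h
  · have hk := k.isLt
    rw [Finset.sum_eq_single ⟨(k : ℕ) - 1, by omega⟩]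
    · split_ifs <;> norm_num
    · intro j _ hj
      refine if_neg fun hjk => hj (Fin.ext ?_)
      simp only
      omega
    · simp
  · exact (Finset.sum_eq_zero fun j _ => if_neg (by omega)).le

/-- Bound for the Gershgorin radii of a tridiagonal matrix with off-diagonal entries `1`. -/
theorem sum_norm_erase_le_of_tridiagonal {n : ℕ} {A : Matrix (Fin n) (Fin n) ℂ} {d : Fin n → ℂ}
    (hA : ∀ k m : Fin n, A k m =
      if (k : ℕ) + 1 = (m : ℕ) then 1
      else if (m : ℕ) + 1 = (k : ℕ) then 1
      else if k = m then d k else 0) (k : Fin n) :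
    ∑ j ∈ Finset.univ.erase k, ‖A k j‖ ≤
      (if (k : ℕ) + 1 < n then 1 else 0) + (if 0 < (k : ℕ) then 1 else 0) := by
  calc ∑ j ∈ Finset.univ.erase k, ‖A k j‖
      ≤ ∑ j ∈ Finset.univ.erase k, ((if (k : ℕ) + 1 = (j : ℕ) then (1 : ℝ) else 0) +
          (if (j : ℕ) + 1 = (k : ℕ) then (1 : ℝ) else 0)) := by
        refine Finset.sum_le_sum fun j hj => ?_
        rw [hA, if_neg (Finset.ne_of_mem_erase hj).symm]
        split_ifs <;> norm_num
    _ ≤ ∑ j : Fin n, ((if (k : ℕ) + 1 = (j : ℕ) then (1 : ℝ) else 0) +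
          (if (j : ℕ) + 1 = (k : ℕ) then (1 : ℝ) else 0)) := by
        refine Finset.sum_le_sum_of_subset_of_nonneg (Finset.erase_subset _ _) fun j _ _ => ?_
        positivity
    _ ≤ _ := by
        rw [Finset.sum_add_distrib]
        exact add_le_add (sum_ite_val_succ_eq_le k) (sum_ite_succ_val_eq_le k)

/-- broken PT symmetry, part 2: if `|γ_1| > 1`, `|γ_{2N}| > 1`, and `|γ_k| > 2`
for all `2 ≤ k ≤ 2N−1` (written `0`-based below), then `J` has no real eigenvalue. -/
theorem stmt_6 (N : ℕ) (hN : 1 ≤ N) (γ : Fin (2 * N) → ℝ)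
    (hγ : ∀ k : Fin (2 * N), γ k = - γ ⟨2 * N - 1 - (k : ℕ), by have := k.isLt; omega⟩)
    (J : Matrix (Fin (2 * N)) (Fin (2 * N)) ℂ)
    (hJ : ∀ k m : Fin (2 * N), J k m =
      if (k : ℕ) + 1 = (m : ℕ) then 1
      else if (m : ℕ) + 1 = (k : ℕ) then 1
      else if k = m then Complex.I * (γ k : ℂ) else 0)
    (hfirst : |γ ⟨0, by omega⟩| > 1)
    (hlast : |γ ⟨2 * N - 1, by omega⟩| > 1)
    (hmid : ∀ k : Fin (2 * N), 0 < (k : ℕ) → (k : ℕ) < 2 * N - 1 → |γ k| > 2) :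
    ∀ μ : ℂ, μ ∈ spectrum ℂ J → μ.im ≠ 0 := by
  intro μ hμ
  obtain ⟨k, hk⟩ := exists_mem_closedBall_of_mem_spectrum hμ
  have hrad := sum_norm_erase_le_of_tridiagonal (d := fun k => Complex.I * (γ k : ℂ)) hJ k
  have hdiag : J k k = Complex.I * (γ k : ℂ) := by simp [hJ]
  rw [hdiag] at hk
  refine im_ne_zero_of_mem_closedBall hk (hrad.trans_lt ?_)
  have hlt := k.isLt
  rcases Nat.eq_zero_or_pos (k : ℕ) with h0 | h0
  · have hk0 : k = ⟨0, by omega⟩ := Fin.ext h0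
    rw [← hk0] at hfirst
    rw [if_neg (by omega : ¬ 0 < (k : ℕ))]
    split_ifs <;> linarith
  · by_cases h1 : (k : ℕ) < 2 * N - 1
    · have := hmid k h0 h1
      split_ifs <;> linarith
    · have hkl : k = ⟨2 * N - 1, by omega⟩ := Fin.ext (by simp only; omega)
      rw [← hkl] at hlast
      rw [if_neg (by omega : ¬ (k : ℕ) + 1 < 2 * N)]
      split_ifs <;> linarith
end
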